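/- arXiv:2501.07831 — 2 statements merged into one kernel-verified Lean document; each statement's English description precedes it below -/
import Mathlib

section
/- Let K > 0, U_C = 2μ/(γ+1), U_D = 2/(3−γ), and set y_D = −K·(U_D − U_C)^((1−μ)/μ)·U_D^(−1/μ), which is a finite negative number. Define Φ_ED : (U_D,∞) → ℝ by Φ_ED(U) = −K·(U − U_C)^((1−μ)/μ)·U^(−1/μ). Then Φ_ED is negative and differentiable, satisfies Φ_ED'(U)·g(U) = Φ_ED(U) for every U > U_D (so that its inverse solves y·dU/dy = g(U)), is strictly increasing, satisfies lim_{U→U_D⁺} Φ_ED(U) = y_D and lim_{U→∞} Φ_ED(U) = 0 (hence Φ_ED is a bijection from (U_D,∞) onto (y_D,0)), and moreover lim_{U→∞} U·Φ_ED(U) = −K. -/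
open Set Filter Topology

noncomputable def UC (γ μ : ℝ) : ℝ := 2 * μ / (γ + 1)
noncomputable def UD (γ : ℝ) : ℝ := 2 / (3 - γ)
/-- Right-hand side of the self-similar Burgers ODE `y dU/dy = g(U)`. -/
noncomputable def g (γ μ U : ℝ) : ℝ := -(((γ + 1) * U - 2 * μ) * U) / ((γ + 1) * U - 2)
/-- `y_D = -K (U_D - U_C)^((1-μ)/μ) U_D^(-1/μ)`. -/
noncomputable def yD (γ μ K : ℝ) : ℝ :=
  -K * (UD γ - UC γ μ) ^ ((1 - μ) / μ) * (UD γ) ^ (-(1 / μ))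
/-- `Φ_ED(U) = -K (U - U_C)^((1-μ)/μ) U^(-1/μ)` on `(U_D, ∞)`. -/
noncomputable def ΦED (γ μ K U : ℝ) : ℝ :=
  -K * (U - UC γ μ) ^ ((1 - μ) / μ) * U ^ (-(1 / μ))

/- With `s = 2 / (γ + 1)` one has `g(U) = -(U - U_C) U / (U - s)` and `U_C = μ s`, so that `1 / g`
splits into partial fractions as `p / (U - U_C) - (p + 1) / U` with `p = (1 - μ) / μ`. This is the
logarithmic derivative of `Φ_ED`, which gives the differential equation. Beyond `s` both `Φ_ED`
and `g` are negative, so `Φ_ED` increases; and since `p - 1 / μ = -1`,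
`U Φ_ED(U) = -K (1 - U_C / U) ^ p`, which gives the behaviour at infinity. -/

theorem bijOn_Ioi_Ioo_of_strictMonoOn_of_tendsto {α β : Type*}
    [ConditionallyCompleteLinearOrder α] [TopologicalSpace α] [OrderTopology α]
    [DenselyOrdered α] [NoMaxOrder α] [LinearOrder β] [TopologicalSpace β] [OrderTopology β]
    {f : α → β} {a : α} {b : β} (hcont : ContinuousOn f (Ici a)) (hmono : StrictMonoOn f (Ici a))
    (hlim : Tendsto f atTop (𝓝 b)) : BijOn f (Ioi a) (Ioo (f a) b) := by
  have : Nonempty α := ⟨a⟩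
  have lt_limit : ∀ x ∈ Ioi a, f x < b := by
    intro x hx
    obtain ⟨z, hxz⟩ := exists_gt x
    have hz : z ∈ Ici a := (lt_trans hx hxz).le
    have z_le_limit : f z ≤ b := ge_of_tendsto hlim <|
      (eventually_ge_atTop z).mono fun w hzw => hmono.monotoneOn hz (le_trans hz hzw) hzw
    exact (hmono (le_of_lt hx) hz hxz).trans_le z_le_limit
  refine ⟨fun x hx => ⟨hmono self_mem_Ici (le_of_lt hx) hx, lt_limit x hx⟩,
    hmono.injOn.mono Ioi_subset_Ici_self, fun y hy => ?_⟩
  obtain ⟨z, hyz, haz⟩ := ((hlim.eventually (lt_mem_nhds hy.2)).and (eventually_ge_atTop a)).exists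
  exact image_mono Ioo_subset_Ioi_self <|
    intermediate_value_Ioo haz (hcont.mono Icc_subset_Ici_self) ⟨hy.1, hyz⟩

theorem tendsto_zero_of_tendsto_mul_atTop {𝕜 : Type*} [Field 𝕜] [LinearOrder 𝕜]
    [IsStrictOrderedRing 𝕜] [TopologicalSpace 𝕜] [OrderTopology 𝕜] {f : 𝕜 → 𝕜} {l : 𝕜}
    (h : Tendsto (fun x => x * f x) atTop (𝓝 l)) : Tendsto f atTop (𝓝 0) := by
  refine (h.div_atTop tendsto_id).congr' ?_
  filter_upwards [eventually_ne_atTop 0] with x hx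
  exact mul_div_cancel_left₀ (f x) hx

theorem tendsto_one_sub_div_rpow_atTop (c p : ℝ) :
    Tendsto (fun x : ℝ => (1 - c / x) ^ p) atTop (𝓝 1) := by
  have base : Tendsto (fun x : ℝ => 1 - c / x) atTop (𝓝 1) := by
    simpa only [sub_zero, id] using
      (tendsto_const_nhds (x := (1 : ℝ))).sub (tendsto_const_nhds.div_atTop tendsto_id)
  simpa only [Real.one_rpow] using base.rpow_const (Or.inl one_ne_zero)

theorem hasDerivAt_sub_rpow_mul_rpow {c x : ℝ} (p q : ℝ) (hx : x ≠ 0) (hxc : x - c ≠ 0) :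
    HasDerivAt (fun y : ℝ => (y - c) ^ p * y ^ q) ((x - c) ^ p * x ^ q * (p / (x - c) + q / x))
      x := by
  have left := ((hasDerivAt_id x).sub_const c).rpow_const (p := p) (Or.inl hxc)
  have right := (hasDerivAt_id x).rpow_const (p := q) (Or.inl hx)
  refine (left.mul right).congr_deriv ?_
  simp only [id, Real.rpow_sub_one hxc, Real.rpow_sub_one hx]
  ring

section Profile

variable {γ μ K U a : ℝ}

theorem g_eq_neg_mul_div_sub (hγ : γ + 1 ≠ 0) :
    g γ μ U = -((U - UC γ μ) * U) / (U - 2 / (γ + 1)) := by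
  have numerator : (γ + 1) * U - 2 * μ = (γ + 1) * (U - UC γ μ) := by unfold UC; field_simp
  have denominator : (γ + 1) * U - 2 = (γ + 1) * (U - 2 / (γ + 1)) := by field_simp
  rw [g, numerator, denominator, mul_assoc, ← mul_neg, mul_div_mul_left _ _ hγ]

theorem g_neg (hγ : γ + 1 ≠ 0) (hU : 0 < U) (hUC : UC γ μ < U) (hs : 2 / (γ + 1) < U) :
    g γ μ U < 0 := by
  rw [g_eq_neg_mul_div_sub hγ]
  exact div_neg_of_neg_of_pos (neg_neg_of_pos (mul_pos (sub_pos.2 hUC) hU)) (sub_pos.2 hs)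

-- At `U = 2 / (γ + 1)` both sides are `0`, as division by zero makes `g` vanish there.
theorem inv_g_eq_add (hγ : γ + 1 ≠ 0) (hμ : μ ≠ 0) (hU : U ≠ 0) (hUC : U - UC γ μ ≠ 0) :
    (g γ μ U)⁻¹ = (1 - μ) / μ / (U - UC γ μ) + -(1 / μ) / U := by
  have s_eq : 2 / (γ + 1) = UC γ μ / μ := by unfold UC; field_simp
  rw [g_eq_neg_mul_div_sub hγ, inv_div, s_eq]
  field_simp
  ring

theorem ΦED_neg (hK : 0 < K) (hU : 0 < U) (hUC : UC γ μ < U) : ΦED γ μ K U < 0 := by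
  have left_pos := Real.rpow_pos_of_pos (sub_pos.2 hUC) ((1 - μ) / μ)
  have right_pos := Real.rpow_pos_of_pos hU (-(1 / μ))
  exact mul_neg_of_neg_of_pos (mul_neg_of_neg_of_pos (neg_neg_of_pos hK) left_pos) right_pos

theorem hasDerivAt_ΦED (hγ : γ + 1 ≠ 0) (hμ : μ ≠ 0) (hU : U ≠ 0) (hUC : U - UC γ μ ≠ 0) :
    HasDerivAt (ΦED γ μ K) (ΦED γ μ K U / g γ μ U) U := by
  have deriv_eq : ΦED γ μ K U / g γ μ U = -K * ((U - UC γ μ) ^ ((1 - μ) / μ) * U ^ (-(1 / μ)) *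
      ((1 - μ) / μ / (U - UC γ μ) + -(1 / μ) / U)) := by
    rw [div_eq_mul_inv, inv_g_eq_add hγ hμ hU hUC, ΦED]
    ring
  rw [deriv_eq]
  refine ((hasDerivAt_sub_rpow_mul_rpow _ _ hU hUC).const_mul (-K)).congr_of_eventuallyEq ?_
  exact .of_forall fun V => mul_assoc _ _ _

theorem continuousOn_ΦED (hγ : γ + 1 ≠ 0) (hμ : μ ≠ 0) (ha : 0 < a) (haC : UC γ μ < a) :
    ContinuousOn (ΦED γ μ K) (Ici a) := fun _ hU =>
  (hasDerivAt_ΦED hγ hμ (ha.trans_le hU).ne'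
    (sub_pos.2 (haC.trans_le hU)).ne').continuousAt.continuousWithinAt

theorem strictMonoOn_ΦED (hγ : γ + 1 ≠ 0) (hμ : μ ≠ 0) (hK : 0 < K) (ha : 0 < a)
    (haC : UC γ μ < a) (hs : 2 / (γ + 1) ≤ a) : StrictMonoOn (ΦED γ μ K) (Ici a) := by
  refine strictMonoOn_of_deriv_pos (convex_Ici a) (continuousOn_ΦED hγ hμ ha haC) fun U hU => ?_
  rw [interior_Ici, mem_Ioi] at hU
  have U_pos := ha.trans hU
  have UC_lt := haC.trans hU
  rw [(hasDerivAt_ΦED hγ hμ U_pos.ne' (sub_pos.2 UC_lt).ne').deriv]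
  exact div_pos_of_neg_of_neg (ΦED_neg hK U_pos UC_lt) (g_neg hγ U_pos UC_lt (hs.trans_lt hU))

theorem mul_ΦED_eq (hμ : μ ≠ 0) (hU : 0 < U) (hUC : UC γ μ ≤ U) :
    U * ΦED γ μ K U = -K * (1 - UC γ μ / U) ^ ((1 - μ) / μ) := by
  have exponent : -(1 / μ) = -((1 - μ) / μ) - 1 := by field_simp; ring
  rw [one_sub_div hU.ne', Real.div_rpow (sub_nonneg.2 hUC) hU.le, ΦED, exponent,
    Real.rpow_sub_one hU.ne', Real.rpow_neg hU.le]
  field_simp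

theorem tendsto_mul_ΦED_atTop (hμ : μ ≠ 0) :
    Tendsto (fun U => U * ΦED γ μ K U) atTop (𝓝 (-K)) := by
  have limit := (tendsto_one_sub_div_rpow_atTop (UC γ μ) ((1 - μ) / μ)).const_mul (-K)
  rw [mul_one] at limit
  refine limit.congr' ?_
  filter_upwards [eventually_gt_atTop 0, eventually_ge_atTop (UC γ μ)] with U hU hUC
  exact (mul_ΦED_eq hμ hU hUC).symm

end Profile

section Endpoint

variable {γ μ : ℝ}

theorem UD_pos (hγ3 : γ < 3) : 0 < UD γ :=
  div_pos two_pos (sub_pos.2 hγ3)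

theorem two_div_lt_UD (hγ1 : 1 < γ) (hγ3 : γ < 3) : 2 / (γ + 1) < UD γ :=
  div_lt_div_of_pos_left two_pos (sub_pos.2 hγ3) (by linarith)

theorem UC_lt_two_div (hγ : 0 < γ + 1) (hμ1 : μ < 1) : UC γ μ < 2 / (γ + 1) :=
  div_lt_div_of_pos_right (by linarith) hγ

end Endpoint

theorem stmt7_general (γ μ K a : ℝ) (hγ : γ + 1 ≠ 0) (hμ : μ ≠ 0) (hK : 0 < K) (ha : 0 < a)
    (haC : UC γ μ < a) (hs : 2 / (γ + 1) ≤ a) :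
    ΦED γ μ K a < 0 ∧
    (∀ U ∈ Ioi a, ΦED γ μ K U < 0) ∧
    (∀ U ∈ Ioi a, DifferentiableAt ℝ (ΦED γ μ K) U) ∧
    (∀ U ∈ Ioi a, deriv (ΦED γ μ K) U * g γ μ U = ΦED γ μ K U) ∧
    StrictMonoOn (ΦED γ μ K) (Ioi a) ∧
    Tendsto (ΦED γ μ K) (𝓝[>] a) (𝓝 (ΦED γ μ K a)) ∧
    Tendsto (ΦED γ μ K) atTop (𝓝 0) ∧
    BijOn (ΦED γ μ K) (Ioi a) (Ioo (ΦED γ μ K a) 0) ∧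
    Tendsto (fun U : ℝ => U * ΦED γ μ K U) atTop (𝓝 (-K)) := by
  have hpos : ∀ U ∈ Ioi a, 0 < U := fun U hU => ha.trans hU
  have hUC : ∀ U ∈ Ioi a, UC γ μ < U := fun U hU => haC.trans hU
  have hderiv : ∀ U ∈ Ioi a, HasDerivAt (ΦED γ μ K) (ΦED γ μ K U / g γ μ U) U := fun U hU =>
    hasDerivAt_ΦED hγ hμ (hpos U hU).ne' (sub_pos.2 (hUC U hU)).ne'
  have hcont : ContinuousOn (ΦED γ μ K) (Ici a) := continuousOn_ΦED hγ hμ ha haC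
  have hmono : StrictMonoOn (ΦED γ μ K) (Ici a) := strictMonoOn_ΦED hγ hμ hK ha haC hs
  have hmul : Tendsto (fun U => U * ΦED γ μ K U) atTop (𝓝 (-K)) := tendsto_mul_ΦED_atTop hμ
  have hlim : Tendsto (ΦED γ μ K) atTop (𝓝 0) := tendsto_zero_of_tendsto_mul_atTop hmul
  refine ⟨ΦED_neg hK ha haC, fun U hU => ΦED_neg hK (hpos U hU) (hUC U hU),
    fun U hU => (hderiv U hU).differentiableAt, fun U hU => ?ode,
    hmono.mono Ioi_subset_Ici_self, (hcont a self_mem_Ici).mono Ioi_subset_Ici_self, hlim,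
    bijOn_Ioi_Ioo_of_strictMonoOn_of_tendsto hcont hmono hlim, hmul⟩
  case ode =>
    rw [(hderiv U hU).deriv]
    exact div_mul_cancel₀ _ (g_neg hγ (hpos U hU) (hUC U hU) (hs.trans_lt hU)).ne

/-- `y_D` is finite negative, and `Φ_ED` is a negative, differentiable,
strictly increasing solution of `Φ_ED'(U) g(U) = Φ_ED(U)` on `(U_D,∞)` with
`Φ_ED → y_D` at `U_D⁺` and `Φ_ED → 0` at `∞` (hence a bijection onto `(y_D,0)`),
and `U Φ_ED(U) → -K` as `U → ∞`. -/
theorem stmt7 (γ μ K : ℝ) (hγ1 : 1 < γ) (hγ3 : γ < 3) (hμ0 : 0 < μ) (hμ1 : μ < 1)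
    (hK : 0 < K) :
    yD γ μ K < 0 ∧
    (∀ U ∈ Ioi (UD γ), ΦED γ μ K U < 0) ∧
    (∀ U ∈ Ioi (UD γ), DifferentiableAt ℝ (ΦED γ μ K) U) ∧
    (∀ U ∈ Ioi (UD γ), deriv (ΦED γ μ K) U * g γ μ U = ΦED γ μ K U) ∧
    StrictMonoOn (ΦED γ μ K) (Ioi (UD γ)) ∧
    Tendsto (ΦED γ μ K) (𝓝[>] (UD γ)) (𝓝 (yD γ μ K)) ∧
    Tendsto (ΦED γ μ K) atTop (𝓝 0) ∧
    BijOn (ΦED γ μ K) (Ioi (UD γ)) (Ioo (yD γ μ K) (0 : ℝ)) ∧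
    Tendsto (fun U : ℝ => U * ΦED γ μ K U) atTop (𝓝 (-K)) := by
  have hγ : 0 < γ + 1 := by linarith
  have hs : 2 / (γ + 1) < UD γ := two_div_lt_UD hγ1 hγ3
  exact stmt7_general γ μ K (UD γ) hγ.ne' hμ0.ne' hK (UD_pos hγ3)
    ((UC_lt_two_div hγ hμ1).trans hs) hs.le
end

section
/- With U_D = 2/(3−γ), H_D = ((γ−1)/(3−γ))² and C₂ = (γ−1)·(−(γ−3)²μ + γ²−2γ+5)/(2(3−γ)·((γ−3)μ+2)), the following two algebraic identities hold: (G_H(U_D,H_D)·C₂ + G_U(U_D,H_D))/(2(U_D−1) − C₂) = −(8 + 4(γ−3)μ)/((3−γ)(γ+1)), and C₂·(−(8 + 4(γ−3)μ)/((3−γ)(γ+1))) = 2(γ−1)·((3−γ)²μ − (γ²−2γ+5))/((3−γ)²(γ+1)). (These give the values of y_D·U'(y_D) and y_D·H'(y_D) for solution curves approaching D along the slope C₂.) -/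
noncomputable def k₁ (γ μ : ℝ) : ℝ := ((γ + 1) + μ * (3 - γ)) / 2
noncomputable def k₂ (γ μ : ℝ) : ℝ := 2 * (1 - μ) / (γ - 1)
noncomputable def GH (γ μ U H : ℝ) : ℝ := U + k₂ γ μ
noncomputable def GU (γ μ U H : ℝ) : ℝ := H - 3 * U ^ 2 + 2 * (1 + μ) * U - μ
noncomputable def HD (γ : ℝ) : ℝ := ((γ - 1) / (3 - γ)) ^ 2
noncomputable def C₂D (γ μ : ℝ) : ℝ :=
  (γ - 1) * (-(γ - 3) ^ 2 * μ + γ ^ 2 - 2 * γ + 5) / (2 * (3 - γ) * ((γ - 3) * μ + 2))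

/-!
The point `D` lies on the curve `H = (U - 1)²`, where `G` also vanishes, so the equation
`y U' = G / ((U - 1)² - H)` degenerates to `0 / 0` there. Along a curve of slope `dH/dU = C₂` the
limit is, by l'Hôpital's rule, `(G_H C₂ + G_U) / (2 (U_D - 1) - C₂)`, and `y H'` tends to `C₂` times
it. Writing `d = (γ - 3) μ + 2`, the factor `d` of `G_H` at `D` cancels the one in the denominator
of `C₂`; the numerator and the denominator of the quotient then share the factor `(γ - 1) (1 - μ)`,
and what remains is `-4 d / ((3 - γ) (γ + 1))`.
-/

section CriticalPoint

variable {γ μ : ℝ}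

lemma UD_sub_one (hγ3 : γ ≠ 3) : UD γ - 1 = (γ - 1) / (3 - γ) := by
  have h3 : 3 - γ ≠ 0 := sub_ne_zero.mpr hγ3.symm
  unfold UD
  field_simp
  ring

lemma GH_UD (H : ℝ) (hγ1 : γ ≠ 1) (hγ3 : γ ≠ 3) :
    GH γ μ (UD γ) H = 2 * ((γ - 3) * μ + 2) / ((3 - γ) * (γ - 1)) := by
  have h1 : γ - 1 ≠ 0 := sub_ne_zero.mpr hγ1
  have h3 : 3 - γ ≠ 0 := sub_ne_zero.mpr hγ3.symm
  unfold GH UD k₂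
  field_simp
  ring

lemma GU_UD_HD (hγ3 : γ ≠ 3) :
    GU γ μ (UD γ) (HD γ)
      = (γ ^ 2 - 6 * γ + 1 + (3 - γ) * (γ + 1) * μ) / (3 - γ) ^ 2 := by
  have h3 : 3 - γ ≠ 0 := sub_ne_zero.mpr hγ3.symm
  unfold GU UD HD
  field_simp
  ring

lemma GH_UD_mul_C₂D (H : ℝ) (hγ1 : γ ≠ 1) (hγ3 : γ ≠ 3) (hd : (γ - 3) * μ + 2 ≠ 0) :
    GH γ μ (UD γ) H * C₂D γ μ
      = (-(γ - 3) ^ 2 * μ + γ ^ 2 - 2 * γ + 5) / (3 - γ) ^ 2 := by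
  have h1 : γ - 1 ≠ 0 := sub_ne_zero.mpr hγ1
  rw [GH_UD H hγ1 hγ3, C₂D]
  field_simp

lemma GH_UD_mul_C₂D_add_GU_UD_HD (hγ1 : γ ≠ 1) (hγ3 : γ ≠ 3) (hd : (γ - 3) * μ + 2 ≠ 0) :
    GH γ μ (UD γ) (HD γ) * C₂D γ μ + GU γ μ (UD γ) (HD γ)
      = -(2 * (γ - 1) * (1 - μ)) / (3 - γ) := by
  have h3 : 3 - γ ≠ 0 := sub_ne_zero.mpr hγ3.symm
  rw [GH_UD_mul_C₂D (HD γ) hγ1 hγ3 hd, GU_UD_HD hγ3]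
  field_simp
  ring

lemma two_mul_UD_sub_one_sub_C₂D (hγ3 : γ ≠ 3) (hd : (γ - 3) * μ + 2 ≠ 0) :
    2 * (UD γ - 1) - C₂D γ μ
      = (γ - 1) * (γ + 1) * (1 - μ) / (2 * ((γ - 3) * μ + 2)) := by
  have h3 : 3 - γ ≠ 0 := sub_ne_zero.mpr hγ3.symm
  rw [UD_sub_one hγ3, C₂D]
  field_simp
  ring

lemma GH_UD_mul_C₂D_add_GU_UD_HD_div (hγ1 : γ ≠ 1) (hγ3 : γ ≠ 3) (hμ1 : μ ≠ 1)
    (hd : (γ - 3) * μ + 2 ≠ 0) :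
    (GH γ μ (UD γ) (HD γ) * C₂D γ μ + GU γ μ (UD γ) (HD γ)) / (2 * (UD γ - 1) - C₂D γ μ)
      = -(8 + 4 * (γ - 3) * μ) / ((3 - γ) * (γ + 1)) := by
  have h1 : γ - 1 ≠ 0 := sub_ne_zero.mpr hγ1
  have hμ : 1 - μ ≠ 0 := sub_ne_zero.mpr hμ1.symm
  rw [GH_UD_mul_C₂D_add_GU_UD_HD hγ1 hγ3 hd, two_mul_UD_sub_one_sub_C₂D hγ3 hd]
  field_simp
  ring

lemma C₂D_mul_neg_div (hd : (γ - 3) * μ + 2 ≠ 0) :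
    C₂D γ μ * (-(8 + 4 * (γ - 3) * μ) / ((3 - γ) * (γ + 1)))
      = 2 * (γ - 1) * ((3 - γ) ^ 2 * μ - (γ ^ 2 - 2 * γ + 5))
          / ((3 - γ) ^ 2 * (γ + 1)) := by
  have hnum : 8 + 4 * (γ - 3) * μ = 4 * ((γ - 3) * μ + 2) := by ring
  rw [C₂D, hnum]
  field_simp
  ring

lemma sub_three_mul_add_two_pos (hγ1 : 1 < γ) (hγ3 : γ ≤ 3) (hμ1 : μ ≤ 1) :
    0 < (γ - 3) * μ + 2 := by
  calc
    0 < (γ - 1) + (3 - γ) * (1 - μ) :=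
      add_pos_of_pos_of_nonneg (sub_pos.mpr hγ1)
        (mul_nonneg (sub_nonneg.mpr hγ3) (sub_nonneg.mpr hμ1))
    _ = (γ - 3) * μ + 2 := by ring

end CriticalPoint

theorem stmt11_general (γ μ : ℝ) (hγ1 : γ ≠ 1) (hγ3 : γ ≠ 3) (_hγ : γ ≠ -1) (hμ1 : μ ≠ 1)
    (hd : (γ - 3) * μ + 2 ≠ 0) :
    (GH γ μ (UD γ) (HD γ) * C₂D γ μ + GU γ μ (UD γ) (HD γ))
        / (2 * (UD γ - 1) - C₂D γ μ)
      = -(8 + 4 * (γ - 3) * μ) / ((3 - γ) * (γ + 1)) ∧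
    C₂D γ μ * (-(8 + 4 * (γ - 3) * μ) / ((3 - γ) * (γ + 1)))
      = 2 * (γ - 1) * ((3 - γ) ^ 2 * μ - (γ ^ 2 - 2 * γ + 5))
          / ((3 - γ) ^ 2 * (γ + 1)) :=
  ⟨GH_UD_mul_C₂D_add_GU_UD_HD_div hγ1 hγ3 hμ1 hd, C₂D_mul_neg_div hd⟩

/-- the two algebraic identities giving the values of `y_D U'(y_D)` and
`y_D H'(y_D)` for solution curves approaching `D` along the slope `C₂`. -/
theorem stmt11 (γ μ : ℝ) (hγ1 : 1 < γ) (hγ3 : γ < 3) (hμ0 : 0 < μ) (hμ1 : μ < 1) :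
    (GH γ μ (UD γ) (HD γ) * C₂D γ μ + GU γ μ (UD γ) (HD γ))
        / (2 * (UD γ - 1) - C₂D γ μ)
      = -(8 + 4 * (γ - 3) * μ) / ((3 - γ) * (γ + 1)) ∧
    C₂D γ μ * (-(8 + 4 * (γ - 3) * μ) / ((3 - γ) * (γ + 1)))
      = 2 * (γ - 1) * ((3 - γ) ^ 2 * μ - (γ ^ 2 - 2 * γ + 5))
          / ((3 - γ) ^ 2 * (γ + 1)) :=
  stmt11_general γ μ hγ1.ne' hγ3.ne (by linarith) hμ1.ne
    (sub_three_mul_add_two_pos hγ1 hγ3.le hμ1.le).ne'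
end
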